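/- arXiv:1104.2317 — 2 statements merged into one kernel-verified Lean document; each statement's English description precedes it below -/
import Mathlib

section
/- For every $s \in (0,1)$ and $r > 0$ there exists a constant $C(r,s) < \infty$ such that $\int_{-r}^{r} \|(B - uI)^{-1}\|^s\,du \le C(r,s)$ for every $2 \times 2$ complex matrix $B$ whose imaginary part $\frac{1}{2i}(B - B^*)$ is positive semidefinite or negative semidefinite. -/
open MeasureTheory Matrix
open scoped ComplexOrder

lemma normBound (A : Matrix (Fin 2) (Fin 2) ℂ) :
    ‖Matrix.toEuclideanCLM (𝕜 := ℂ) A‖ ≤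
      Real.sqrt (‖A 0 0‖^2 + ‖A 0 1‖^2 + ‖A 1 0‖^2 + ‖A 1 1‖^2) := by
  apply ContinuousLinearMap.opNorm_le_bound _ (Real.sqrt_nonneg _)
  intro v
  rw [EuclideanSpace.norm_eq, EuclideanSpace.norm_eq, ← Real.sqrt_mul (by positivity)]
  apply Real.sqrt_le_sqrt
  simp only [Fin.sum_univ_two, Matrix.ofLp_toEuclideanCLM, Matrix.mulVec, dotProduct]
  have key : ∀ a b x y : ℂ, ‖a * x + b * y‖^2 ≤ (‖a‖^2+‖b‖^2) * (‖x‖^2+‖y‖^2) := by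
    intro a b x y
    have h := norm_add_le (a*x) (b*y)
    rw [norm_mul, norm_mul] at h
    have := pow_le_pow_left₀ (norm_nonneg _) h 2
    nlinarith [sq_nonneg (‖a‖*‖y‖ - ‖b‖*‖x‖)]
  have h1 := key (A 0 0) (A 0 1) (v 0) (v 1)
  have h2 := key (A 1 0) (A 1 1) (v 0) (v 1)
  linarith

lemma eigs (t d : ℂ) : ∃ p q : ℂ, p + q = t ∧ p * q = d := by
  obtain ⟨z, hz⟩ := IsAlgClosed.exists_pow_nat_eq (t^2 - 4*d) (n := 2) (by norm_num)
  refine ⟨(t+z)/2, (t-z)/2, by ring, ?_⟩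
  linear_combination -hz/4

/-- Frobenius bound -/
lemma frob (a b c d p q : ℂ) (h1 : p + q = a + d) (h2 : p * q = a*d - b*c)
    (hK : Complex.normSq (b - star c) ≤ 4 * a.im * d.im) :
    ‖a‖^2 + ‖b‖^2 + ‖c‖^2 + ‖d‖^2 ≤ (2 * (‖p‖ + ‖q‖))^2 := by
  have h3 : p.im * q.im ≤ ‖p‖ * ‖q‖ := by
    calc p.im * q.im ≤ |p.im * q.im| := le_abs_self _
      _ = |p.im| * |q.im| := abs_mul _ _
      _ ≤ _ := mul_le_mul (Complex.abs_im_le_norm _) (Complex.abs_im_le_norm _) (abs_nonneg _) (norm_nonneg _)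
  have e1 := congrArg Complex.re h1
  have e2 := congrArg Complex.im h1
  have e3 := congrArg Complex.re h2
  simp only [Complex.add_re, Complex.add_im, Complex.mul_re, Complex.sub_re] at e1 e2 e3
  simp only [Complex.normSq_apply, Complex.sub_re, Complex.sub_im, Complex.star_def, Complex.conj_re, Complex.conj_im] at hK
  have e1' : (p.re+q.re)^2 = (a.re+d.re)^2 := by rw [e1]
  have e2' : (p.im+q.im)^2 = (a.im+d.im)^2 := by rw [e2]
  have hp := Complex.sq_norm p
  have hq := Complex.sq_norm q
  have ha : ‖a‖^2 + ‖b‖^2 + ‖c‖^2 + ‖d‖^2 ≤ ‖p‖^2+‖q‖^2 + 4 * (p.im*q.im) := by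
    simp only [Complex.sq_norm, Complex.normSq_apply]
    nlinarith
  nlinarith [norm_nonneg p, norm_nonneg q, mul_nonneg (norm_nonneg p) (norm_nonneg q), sq_nonneg ‖p‖, sq_nonneg ‖q‖]

lemma detK (B : Matrix (Fin 2) (Fin 2) ℂ) (h : ((((2 * Complex.I)⁻¹ • (B - Bᴴ)) : Matrix (Fin 2) (Fin 2) ℂ).PosSemidef ∨
        ((-((2 * Complex.I)⁻¹ • (B - Bᴴ))) : Matrix (Fin 2) (Fin 2) ℂ).PosSemidef)) :
    Complex.normSq (B 0 1 - star (B 1 0)) ≤ 4 * (B 0 0).im * (B 1 1).im := by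
  have h0 : 0 ≤ (((2 * Complex.I)⁻¹ • (B - Bᴴ)) : Matrix (Fin 2) (Fin 2) ℂ).det := by
    rcases h with h | h
    · exact h.det_nonneg
    · have := h.det_nonneg
      rwa [Matrix.det_neg, Fintype.card_fin, neg_one_sq, one_mul] at this
  rw [Matrix.det_smul, Fintype.card_fin, Matrix.det_fin_two] at h0
  have e : ((2 * Complex.I)⁻¹)^2 = ((-1/4 : ℝ) : ℂ) := by
    rw [inv_pow, mul_pow, Complex.I_sq]; push_cast; norm_num
  rw [e] at h0
  have := (Complex.le_def.1 h0).1
  rw [Complex.re_ofReal_mul] at this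
  simp [Complex.mul_re] at this
  simp only [Complex.normSq_apply, Complex.sub_re, Complex.sub_im, Complex.star_def, Complex.conj_re, Complex.conj_im]
  nlinarith

lemma one_dim (s r : ℝ) (hs : s ∈ Set.Ioo (0 : ℝ) 1) (hr : 0 < r) : ∃ C : ℝ, ∀ x : ℝ,
    ∃ g : ℝ → ℝ, (∀ u, u ≠ x → (|u - x|⁻¹)^s ≤ g u) ∧ IntegrableOn g (Set.Icc (-r) r) ∧
      ∫ u in Set.Icc (-r) r, g u ≤ C := by
  let p : ℝ → ℝ := Set.indicator (Set.Ioc 0 1) (fun t => t ^ (-s))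
  have hp : Integrable p := by
    rw [integrable_indicator_iff measurableSet_Ioc]
    have := intervalIntegral.intervalIntegrable_rpow' (a := 0) (b := 1) (r := -s) (by linarith [hs.2])
    rwa [intervalIntegrable_iff_integrableOn_Ioc_of_le zero_le_one] at this
  have hp0 : ∀ t, 0 ≤ p t := fun t => Set.indicator_nonneg (fun t ht => Real.rpow_nonneg ht.1.le _) t
  let h : ℝ → ℝ := fun t => p t + p (-t)
  have hh : Integrable h := hp.add hp.comp_neg
  have hh0 : ∀ t, 0 ≤ h t := fun t => add_nonneg (hp0 _) (hp0 _)
  have hle : ∀ t, t ≠ 0 → (|t|⁻¹)^s ≤ 1 + h t := by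
    intro t ht
    have hpos := abs_pos.2 ht
    by_cases h1 : |t| ≤ 1
    · have : (|t|⁻¹)^s = p |t| := by
        simp only [p]
        rw [Set.indicator_of_mem (show |t| ∈ Set.Ioc (0:ℝ) 1 from ⟨hpos, h1⟩), Real.rpow_neg hpos.le, Real.inv_rpow hpos.le]
      rw [this]
      simp only [h]
      rcases abs_choice t with e | e <;> rw [e] <;> linarith [hp0 t, hp0 (-t)]
    · have : (|t|⁻¹)^s ≤ 1 := Real.rpow_le_one (by positivity) (inv_le_one_of_one_le₀ (not_le.1 h1).le) hs.1.le
      linarith [hh0 t]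
  refine ⟨2 * r + ∫ t, h t, fun x => ⟨fun u => 1 + h (u - x), fun u hu => hle _ (sub_ne_zero.2 hu), ?_, ?_⟩⟩
  · exact (integrableOn_const (by simp)).add (hh.comp_sub_right x).integrableOn
  · rw [integral_add (integrable_const (1:ℝ)) (hh.comp_sub_right x).integrableOn]
    have : ∫ u in Set.Icc (-r) r, h (u - x) ≤ ∫ u, h (u - x) :=
      setIntegral_le_integral (hh.comp_sub_right x) (ae_of_all _ fun u => hh0 _)
    rw [integral_sub_right_eq_self (μ := volume) h x] at this
    have e : ∫ u in Set.Icc (-r) r, (1:ℝ) = 2 * r := by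
      simp [Real.volume_real_Icc]
      rw [max_eq_left] <;> linarith
    linarith

lemma ptwise (s : ℝ) (hs : s ∈ Set.Ioo (0 : ℝ) 1) (B : Matrix (Fin 2) (Fin 2) ℂ) (p q : ℂ)
    (hK : Complex.normSq (B 0 1 - star (B 1 0)) ≤ 4 * (B 0 0).im * (B 1 1).im)
    (h1 : p + q = B 0 0 + B 1 1) (h2 : p * q = B 0 0 * B 1 1 - B 0 1 * B 1 0) (u : ℝ)
    (hp : u ≠ p.re) (hq : u ≠ q.re) :
    ‖Matrix.toEuclideanCLM (𝕜 := ℂ) ((B - (u : ℂ) • (1 : Matrix (Fin 2) (Fin 2) ℂ))⁻¹)‖ ^ s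
      ≤ 2 ^ s * ((|u - p.re|⁻¹)^s + (|u - q.re|⁻¹)^s) := by
  have aux : ∀ z : ℂ, u ≠ z.re → 0 < |u - z.re| ∧ |u - z.re| ≤ ‖z - u‖ := by
    intro z hz
    refine ⟨abs_pos.2 (sub_ne_zero.2 hz), ?_⟩
    have := Complex.abs_re_le_norm (z - u)
    rwa [Complex.sub_re, Complex.ofReal_re, abs_sub_comm] at this
  obtain ⟨p1, p2⟩ := aux p hp
  obtain ⟨q1, q2⟩ := aux q hq
  have hF := frob (B 0 0 - u) (B 0 1) (B 1 0) (B 1 1 - u) (p - u) (q - u)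
    (by linear_combination h1) (by linear_combination h2 - u * h1) (by simpa using hK)
  have hdet : (B - (u : ℂ) • (1 : Matrix (Fin 2) (Fin 2) ℂ)).det = (p - u) * (q - u) := by
    rw [Matrix.det_fin_two]
    simp
    linear_combination u * h1 - h2
  have hP : 0 < ‖p - u‖ := p1.trans_le p2
  have hQ : 0 < ‖q - u‖ := q1.trans_le q2
  have hN : ‖Matrix.toEuclideanCLM (𝕜 := ℂ) ((B - (u : ℂ) • (1 : Matrix (Fin 2) (Fin 2) ℂ))⁻¹)‖
      ≤ 2 * (|u - p.re|⁻¹ + |u - q.re|⁻¹) := by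
    rw [Matrix.inv_def, map_smul, norm_smul, hdet, Ring.inverse_eq_inv', norm_inv, norm_mul]
    have hA := normBound (B - (u : ℂ) • (1 : Matrix (Fin 2) (Fin 2) ℂ)).adjugate
    have hA2 : ‖Matrix.toEuclideanCLM (𝕜 := ℂ) (B - (u : ℂ) • (1 : Matrix (Fin 2) (Fin 2) ℂ)).adjugate‖ ≤ 2 * (‖p - u‖ + ‖q - u‖) := by
      refine hA.trans (Real.sqrt_le_iff.2 ⟨by positivity, ?_⟩)
      rw [Matrix.adjugate_fin_two]
      simp
      linarith
    calc _ ≤ (‖p - u‖ * ‖q - u‖)⁻¹ * (2 * (‖p - u‖ + ‖q - u‖)) := by gcongr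
      _ = 2 * (‖p - u‖⁻¹ + ‖q - u‖⁻¹) := by field_simp; ring
      _ ≤ _ := by gcongr
  calc _ ≤ (2 * (|u - p.re|⁻¹ + |u - q.re|⁻¹)) ^ s := Real.rpow_le_rpow (norm_nonneg _) hN hs.1.le
    _ = 2 ^ s * (|u - p.re|⁻¹ + |u - q.re|⁻¹) ^ s := Real.mul_rpow (by norm_num) (by positivity)
    _ ≤ _ := by
      gcongr
      exact Real.rpow_add_le_add_rpow (by positivity) (by positivity) hs.1.le hs.2.le

/-- uniform bound on fractional moments of the resolvent of a
dissipative (or anti-dissipative) 2×2 matrix. -/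
theorem stmt_1 (s r : ℝ) (hs : s ∈ Set.Ioo (0 : ℝ) 1) (hr : 0 < r) :
    ∃ C : ℝ, ∀ B : Matrix (Fin 2) (Fin 2) ℂ,
      ((((2 * Complex.I)⁻¹ • (B - Bᴴ)) : Matrix (Fin 2) (Fin 2) ℂ).PosSemidef ∨
        ((-((2 * Complex.I)⁻¹ • (B - Bᴴ))) : Matrix (Fin 2) (Fin 2) ℂ).PosSemidef) →
      ∫ u in Set.Icc (-r) r,
        ‖Matrix.toEuclideanCLM (𝕜 := ℂ) ((B - (u : ℂ) • (1 : Matrix (Fin 2) (Fin 2) ℂ))⁻¹)‖ ^ s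
        ≤ C := by
  obtain ⟨C, hC⟩ := one_dim s r hs hr
  refine ⟨2 ^ s * (C + C), fun B hB => ?_⟩
  obtain ⟨p, q, h1, h2⟩ := eigs (B 0 0 + B 1 1) (B 0 0 * B 1 1 - B 0 1 * B 1 0)
  obtain ⟨g, g1, g2, g3⟩ := hC p.re
  obtain ⟨k, k1, k2, k3⟩ := hC q.re
  calc _ ≤ ∫ u in Set.Icc (-r) r, 2 ^ s * (g u + k u) := by
        apply integral_mono_of_nonneg
        · exact ae_of_all _ fun u => Real.rpow_nonneg (norm_nonneg _) _
        · exact (g2.add k2).const_mul _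
        · filter_upwards [ae_restrict_of_ae (Measure.ae_ne volume p.re), ae_restrict_of_ae (Measure.ae_ne volume q.re)] with u hu hv
          refine (ptwise s hs B p q (detK B hB) h1 h2 u hu hv).trans ?_
          have := g1 u hu
          have := k1 u hv
          gcongr
    _ = 2 ^ s * ((∫ u in Set.Icc (-r) r, g u) + ∫ u in Set.Icc (-r) r, k u) := by
        rw [integral_const_mul, integral_add g2 k2]
    _ ≤ _ := by gcongr
end

section
/- (Eigenfunction correlator identity) Let $\mathcal{H}$ be finite-dimensional, $h_0$ self-adjoint with unit cyclic vector $\varphi$, $h_v = h_0 + v\langle\varphi,\cdot\rangle\varphi$, and for $\chi \in \mathcal{H}$, $s \in (0,1)$, open interval $I \subset \mathbb{R}$ define $Q_v(\varphi,\chi;I,s) = \sum_{k: E_k(v)\in I} |\langle\psi_k(v),\varphi\rangle|^{2-s} |\langle\psi_k(v),\chi\rangle|^s$, where $(E_k(v),\psi_k(v))$ are eigenvalue/normalized-eigenvector pairs of $h_v$. Then $\int_{\mathbb{R}} \frac{Q_v(\varphi,\chi;I,s)}{|v|^s}\,dv = \int_I |\langle\varphi, (h_0 - E)^{-1}\chi\rangle|^s\,dE$.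 -/
open MeasureTheory
open scoped InnerProductSpace

lemma aux_cyc {N : ℕ} {h0 : EuclideanSpace ℂ (Fin N) →L[ℂ] EuclideanSpace ℂ (Fin N)}
    (hsa : IsSelfAdjoint h0) {φ : EuclideanSpace ℂ (Fin N)}
    (hcyc : ⊤ ≤ Submodule.span ℂ (Set.range fun k : ℕ => (h0 ^ k) φ))
    {v e : ℝ} {x : EuclideanSpace ℂ (Fin N)} (hx : x ≠ 0)
    (h : (h0 + (v : ℂ) • (innerSL ℂ φ).smulRight φ) x = (e : ℂ) • x) :
    (⟪φ, x⟫_ℂ) ≠ 0 := by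
  intro h1
  have h2 : h0 x = (e : ℂ) • x := by
    simpa [h1] using h
  have hsym : ∀ u w, ⟪h0 u, w⟫_ℂ = ⟪u, h0 w⟫_ℂ := fun u w =>
    (ContinuousLinearMap.isSelfAdjoint_iff_isSymmetric.1 hsa) u w
  have h3 : ∀ k : ℕ, ⟪(h0 ^ k) φ, x⟫_ℂ = 0 := by
    intro k
    induction k with
    | zero => simpa using h1
    | succ k ih =>
      rw [pow_succ', ContinuousLinearMap.mul_apply, hsym, h2, inner_smul_right, ih, mul_zero]
  have h4 : ∀ y, ⟪y, x⟫_ℂ = 0 := by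
    intro y
    have hy := hcyc (Submodule.mem_top (x := y))
    induction hy using Submodule.span_induction with
    | mem y hy => obtain ⟨k, rfl⟩ := hy; exact h3 k
    | zero => simp
    | add a b _ _ ha hb => rw [inner_add_left, ha, hb, add_zero]
    | smul c a _ ha => rw [inner_smul_left, ha, mul_zero]
  exact hx (inner_self_eq_zero.1 (h4 x))

lemma aux_inj {N : ℕ} {h0 : EuclideanSpace ℂ (Fin N) →L[ℂ] EuclideanSpace ℂ (Fin N)}
    (hsa : IsSelfAdjoint h0) {φ : EuclideanSpace ℂ (Fin N)}
    (hcyc : ⊤ ≤ Submodule.span ℂ (Set.range fun k : ℕ => (h0 ^ k) φ))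
    {v w e : ℝ} {x y : EuclideanSpace ℂ (Fin N)} (hx : x ≠ 0) (hy : y ≠ 0)
    (h : (h0 + (v : ℂ) • (innerSL ℂ φ).smulRight φ) x = (e : ℂ) • x)
    (h' : (h0 + (w : ℂ) • (innerSL ℂ φ).smulRight φ) y = (e : ℂ) • y) :
    v = w := by
  have hsym : ∀ u w, ⟪h0 u, w⟫_ℂ = ⟪u, h0 w⟫_ℂ := fun u w =>
    (ContinuousLinearMap.isSelfAdjoint_iff_isSymmetric.1 hsa) u w
  have n1 := aux_cyc hsa hcyc hx h
  have n2 := aux_cyc hsa hcyc hy h'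
  have n3 : ⟪y, φ⟫_ℂ ≠ 0 := by rwa [Ne, inner_eq_zero_symm]
  have e1 : h0 x = (e : ℂ) • x - ((v : ℂ) * ⟪φ, x⟫_ℂ) • φ := by
    rw [← h]; simp [smul_smul, -Complex.coe_smul]
  have e2 : h0 y = (e : ℂ) • y - ((w : ℂ) * ⟪φ, y⟫_ℂ) • φ := by
    rw [← h']; simp [smul_smul, -Complex.coe_smul]
  have e3 := hsym y x
  rw [e1, e2, inner_sub_left, inner_sub_right, inner_smul_left, inner_smul_left, inner_smul_right,
    inner_smul_right, map_mul, inner_conj_symm, Complex.conj_ofReal, Complex.conj_ofReal] at e3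
  have e4 : ((v : ℂ) - w) * (⟪y, φ⟫_ℂ * ⟪φ, x⟫_ℂ) = 0 := by linear_combination e3
  rcases mul_eq_zero.1 e4 with h5 | h5
  · exact_mod_cast sub_eq_zero.1 h5
  · exact absurd h5 (mul_ne_zero n3 n1)

lemma aux_unit {N : ℕ} (A : EuclideanSpace ℂ (Fin N) →L[ℂ] EuclideanSpace ℂ (Fin N))
    (h : ∀ x, A x = 0 → x = 0) : IsUnit A := by
  rw [ContinuousLinearMap.isUnit_iff_bijective]
  have hi : Function.Injective A.toLinearMap :=
    (injective_iff_map_eq_zero _).2 h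
  exact ⟨hi, LinearMap.injective_iff_surjective.1 hi⟩

lemma aux_meas {N : ℕ} (h0 : EuclideanSpace ℂ (Fin N) →L[ℂ] EuclideanSpace ℂ (Fin N))
    (φ χ : EuclideanSpace ℂ (Fin N)) (s : ℝ) (hs : 0 < s) :
    Measurable fun En : ℝ => ‖(⟪φ, Ring.inverse (h0 - (En : ℂ) • 1) χ⟫_ℂ)‖ ^ s := by
  classical
  set F := fun En : ℝ => ‖(⟪φ, Ring.inverse (h0 - (En : ℂ) • 1) χ⟫_ℂ)‖ ^ s with hF
  have hc : Continuous fun En : ℝ => h0 - (En : ℂ) • (1 : EuclideanSpace ℂ (Fin N) →L[ℂ] EuclideanSpace ℂ (Fin N)) := by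
    fun_prop
  let U : Set ℝ := {En : ℝ | IsUnit (h0 - (En : ℂ) • (1 : EuclideanSpace ℂ (Fin N) →L[ℂ] EuclideanSpace ℂ (Fin N)))}
  have hU : IsOpen U := Units.isOpen.preimage hc
  have h1 : ContinuousOn F U := by
    intro En hEn
    apply ContinuousAt.continuousWithinAt
    obtain ⟨u, hu⟩ : IsUnit _ := hEn
    have hi : ContinuousAt (fun En : ℝ => Ring.inverse (h0 - (En : ℂ) • (1 : EuclideanSpace ℂ (Fin N) →L[ℂ] EuclideanSpace ℂ (Fin N)))) En := by
      refine ContinuousAt.comp (g := Ring.inverse) ?_ hc.continuousAt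
      rw [← hu]
      exact NormedRing.inverse_continuousAt u
    have : ContinuousAt (fun En : ℝ => ‖(⟪φ, Ring.inverse (h0 - (En : ℂ) • 1) χ⟫_ℂ)‖) En :=
      (continuousAt_const.inner (hi.clm_apply continuousAt_const)).norm
    exact this.rpow_const (Or.inr hs.le)
  have h2 : F = U.piecewise F (fun _ => 0) := by
    ext En
    by_cases h : En ∈ U
    · rw [Set.piecewise_eq_of_mem _ _ _ h]
    · rw [Set.piecewise_eq_of_notMem _ _ _ h]
      simp only [hF]
      rw [Ring.inverse_non_unit _ h]
      simp [hs.ne']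
  rw [h2]
  exact h1.measurable_piecewise continuousOn_const hU.measurableSet

lemma aux_cover {N : ℕ} {h0 : EuclideanSpace ℂ (Fin N) →L[ℂ] EuclideanSpace ℂ (Fin N)}
    (hsa : IsSelfAdjoint h0) {φ : EuclideanSpace ℂ (Fin N)} (hφ : ‖φ‖ = 1)
    (E : Fin N → ℝ → ℝ)
    (hall : ∀ (v : ℝ) (μ : ℂ),
      Module.End.HasEigenvalue
        ((h0 + (v : ℂ) • (innerSL ℂ φ).smulRight φ).toLinearMap) μ → ∃ k, μ = (E k v : ℂ)) :
    (⋃ k, Set.range (E k))ᶜ.Finite := by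
  have hsym : ∀ u w, ⟪h0 u, w⟫_ℂ = ⟪u, h0 w⟫_ℂ := fun u w =>
    (ContinuousLinearMap.isSelfAdjoint_iff_isSymmetric.1 hsa) u w
  have key : ∀ (v e : ℝ) (x : EuclideanSpace ℂ (Fin N)), x ≠ 0 →
      (h0 + (v : ℂ) • (innerSL ℂ φ).smulRight φ) x = (e : ℂ) • x →
      e ∈ ⋃ k, Set.range (E k) := by
    intro v e x hx h
    obtain ⟨k, hk⟩ := hall v e (Module.End.hasEigenvalue_of_hasEigenvector
      (x := x) ⟨Module.End.mem_eigenspace_iff.2 h, hx⟩)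
    exact Set.mem_iUnion.2 ⟨k, v, by exact_mod_cast hk.symm⟩
  have hφ0 : φ ≠ 0 := by rintro rfl; simp at hφ
  have hφφ : ⟪φ, φ⟫_ℂ = 1 := by rw [inner_self_eq_norm_sq_to_K, hφ]; simp
  let K : Module.End ℂ (EuclideanSpace ℂ (Fin N)) :=
    (h0 - ((innerSL ℂ φ).smulRight φ) ∘L h0).toLinearMap
  have hfin : {μ : ℂ | K.HasEigenvalue μ}.Finite := Module.End.finite_hasEigenvalue K
  refine (hfin.preimage (f := fun x : ℝ => (x : ℂ)) Complex.ofReal_injective.injOn).subset ?_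
  intro e he
  have hu : IsUnit (h0 - (e : ℂ) • (1 : EuclideanSpace ℂ (Fin N) →L[ℂ] EuclideanSpace ℂ (Fin N))) := by
    apply aux_unit
    intro x hx
    by_contra hx0
    refine he (key 0 e x hx0 ?_)
    simpa [sub_eq_zero] using hx
  obtain ⟨y, hy⟩ := ((ContinuousLinearMap.isUnit_iff_bijective).1 hu).2 φ
  have hy' : h0 y = (e : ℂ) • y + φ := by
    rw [← hy]; simp
  have hy0 : y ≠ 0 := by rintro rfl; simp at hy; exact hφ0 hy.symm
  have hc : ⟪φ, y⟫_ℂ = 0 := by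
    by_contra hc
    have hre : (starRingEnd ℂ) ⟪φ, y⟫_ℂ = ⟪φ, y⟫_ℂ := by
      have := hsym y y
      rw [hy', inner_add_left, inner_add_right, inner_smul_left, inner_smul_right,
        Complex.conj_ofReal, add_right_inj] at this
      rw [inner_conj_symm, this]
    obtain ⟨c, hc'⟩ := Complex.conj_eq_iff_real.1 hre
    rw [hc'] at hc
    refine he (key (-c⁻¹) e y hy0 ?_)
    simp only [ContinuousLinearMap.add_apply, ContinuousLinearMap.smul_apply,
      ContinuousLinearMap.smulRight_apply, innerSL_apply_apply, hc', hy', smul_smul]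
    push_cast
    rw [neg_mul, inv_mul_cancel₀ hc]
    simp
  refine Module.End.hasEigenvalue_of_hasEigenvector (x := y) ⟨Module.End.mem_eigenspace_iff.2 ?_, hy0⟩
  simp [K, hy', inner_add_right, inner_smul_right, hc, hφ, -Complex.coe_smul]

lemma aux_alg {N : ℕ} {h0 : EuclideanSpace ℂ (Fin N) →L[ℂ] EuclideanSpace ℂ (Fin N)}
    (hsa : IsSelfAdjoint h0) {φ : EuclideanSpace ℂ (Fin N)} (χ : EuclideanSpace ℂ (Fin N))
    (hcyc : ⊤ ≤ Submodule.span ℂ (Set.range fun k : ℕ => (h0 ^ k) φ))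
    {v e s : ℝ} (hv : v ≠ 0) {x : EuclideanSpace ℂ (Fin N)} (hx : x ≠ 0)
    (h : (h0 + (v : ℂ) • (innerSL ℂ φ).smulRight φ) x = (e : ℂ) • x) :
    ‖(⟪x, φ⟫_ℂ)‖ ^ (2 - s) * ‖(⟪x, χ⟫_ℂ)‖ ^ s / |v| ^ s =
      ‖(⟪x, φ⟫_ℂ)‖ ^ 2 * ‖(⟪φ, Ring.inverse (h0 - (e : ℂ) • 1) χ⟫_ℂ)‖ ^ s := by
  have hsym : ∀ u w, ⟪h0 u, w⟫_ℂ = ⟪u, h0 w⟫_ℂ := fun u w =>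
    (ContinuousLinearMap.isSelfAdjoint_iff_isSymmetric.1 hsa) u w
  have hu : IsUnit (h0 - (e : ℂ) • (1 : EuclideanSpace ℂ (Fin N) →L[ℂ] EuclideanSpace ℂ (Fin N))) := by
    apply aux_unit
    intro y hy
    by_contra hy0
    refine hv (aux_inj hsa hcyc (w := 0) hx hy0 h ?_)
    simpa [sub_eq_zero] using hy
  have n1 := aux_cyc hsa hcyc hx h
  have n3 : ⟪x, φ⟫_ℂ ≠ 0 := by rwa [Ne, inner_eq_zero_symm]
  have e1 : h0 x = (e : ℂ) • x - ((v : ℂ) * ⟪φ, x⟫_ℂ) • φ := by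
    rw [← h]; simp [smul_smul, -Complex.coe_smul]
  set R := Ring.inverse (h0 - (e : ℂ) • (1 : EuclideanSpace ℂ (Fin N) →L[ℂ] EuclideanSpace ℂ (Fin N))) with hR
  have hχ : χ = h0 (R χ) - (e : ℂ) • R χ := by
    have := congrArg (fun T => T χ) (Ring.mul_inverse_cancel _ hu)
    simpa using this.symm
  have e2 : ⟪x, χ⟫_ℂ = -(v * ⟪x, φ⟫_ℂ * ⟪φ, R χ⟫_ℂ) := by
    conv_lhs => rw [hχ]
    rw [inner_sub_right, ← hsym, e1, inner_sub_left, inner_smul_left, inner_smul_left,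
      inner_smul_right, map_mul, inner_conj_symm, Complex.conj_ofReal, Complex.conj_ofReal]
    ring
  have p1 : 0 < ‖⟪x, φ⟫_ℂ‖ := norm_pos_iff.2 n3
  have p2 : 0 < |v| := abs_pos.2 hv
  rw [e2, norm_neg, norm_mul, norm_mul, Complex.norm_real, Real.norm_eq_abs,
    Real.mul_rpow (by positivity) (by positivity), Real.mul_rpow (by positivity) (by positivity),
    Real.rpow_sub p1, Real.rpow_two]
  have p3 := Real.rpow_pos_of_pos p1 s
  have p4 := Real.rpow_pos_of_pos p2 s
  field_simp

/-- the eigenfunction correlator identity (Proposition A.2):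
`∫ Q_v(φ,χ;I,s)/|v|^s dv = ∫_I |⟨φ,(h₀-E)⁻¹χ⟩|^s dE` for the rank-one family
`h_v = h_0 + v⟨φ,·⟩φ` with cyclic unit vector `φ`, `I = (a,b)`. -/
theorem stmt_16 (N : ℕ)
    (h0 : EuclideanSpace ℂ (Fin N) →L[ℂ] EuclideanSpace ℂ (Fin N))
    (hsa : IsSelfAdjoint h0) (φ χ : EuclideanSpace ℂ (Fin N)) (hφ : ‖φ‖ = 1)
    (hcyc : ⊤ ≤ Submodule.span ℂ (Set.range fun k : ℕ => (h0 ^ k) φ))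
    (s a b : ℝ) (hs : s ∈ Set.Ioo (0 : ℝ) 1)
    (E : Fin N → ℝ → ℝ) (ψ : Fin N → ℝ → EuclideanSpace ℂ (Fin N))
    (hmono : ∀ v : ℝ, StrictMono fun k => E k v)
    (heig : ∀ (k : Fin N) (v : ℝ), ‖ψ k v‖ = 1 ∧
      (h0 + (v : ℂ) • (innerSL ℂ φ).smulRight φ) (ψ k v) = (E k v : ℂ) • ψ k v)
    (hall : ∀ (v : ℝ) (μ : ℂ),
      Module.End.HasEigenvalue
        ((h0 + (v : ℂ) • (innerSL ℂ φ).smulRight φ).toLinearMap) μ → ∃ k, μ = (E k v : ℂ))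
    (hderiv : ∀ (k : Fin N) (v : ℝ), HasDerivAt (E k) (‖(⟪ψ k v, φ⟫_ℂ)‖ ^ 2) v) :
    ∫ v : ℝ,
        (∑ k : Fin N, if E k v ∈ Set.Ioo a b then
          ‖(⟪ψ k v, φ⟫_ℂ)‖ ^ (2 - s) * ‖(⟪ψ k v, χ⟫_ℂ)‖ ^ s else 0) / |v| ^ s
      = ∫ En in Set.Ioo a b,
          ‖(⟪φ, Ring.inverse (h0 - (En : ℂ) • 1) χ⟫_ℂ)‖ ^ s := by
  classical
  have hψ0 : ∀ k v, ψ k v ≠ 0 := by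
    intro k v h
    have := (heig k v).1
    rw [h, norm_zero] at this
    exact zero_ne_one this
  set F := fun En : ℝ => ‖(⟪φ, Ring.inverse (h0 - (En : ℂ) • 1) χ⟫_ℂ)‖ ^ s with hF
  have hFm : Measurable F := aux_meas h0 φ χ s hs.1
  have hF0 : ∀ x, 0 ≤ F x := fun x => by simp only [hF]; positivity
  set G : ℝ → ℝ := (Set.Ioo a b).indicator F with hG
  have hGm : Measurable G := hFm.indicator measurableSet_Ioo
  have hG0 : ∀ x, 0 ≤ G x := fun x => Set.indicator_nonneg (fun y _ => hF0 y) x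
  have hd0 : ∀ k v, 0 ≤ deriv (E k) v := fun k v => by
    rw [(hderiv k v).deriv]; positivity
  have hEc : ∀ k, Continuous (E k) := fun k =>
    continuous_iff_continuousAt.2 fun v => (hderiv k v).continuousAt
  have hinj2 : ∀ k j v w, E k v = E j w → v = w ∧ k = j := by
    intro k j v w h
    have hvw : v = w := by
      refine aux_inj hsa hcyc (hψ0 k v) (hψ0 j w) (heig k v).2 ?_
      rw [h]; exact (heig j w).2
    subst hvw
    exact ⟨rfl, (hmono v).injective h⟩
  have hinj : ∀ k, Function.Injective (E k) := fun k v w h => (hinj2 k k v w h).1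
  have hae : (fun v : ℝ => (∑ k : Fin N, if E k v ∈ Set.Ioo a b then
          ‖(⟪ψ k v, φ⟫_ℂ)‖ ^ (2 - s) * ‖(⟪ψ k v, χ⟫_ℂ)‖ ^ s else 0) / |v| ^ s)
      =ᵐ[volume] fun v => ∑ k, deriv (E k) v * G (E k v) := by
    have : ∀ᵐ v : ℝ, v ≠ 0 := by
      rw [ae_iff]; simp
    filter_upwards [this] with v hv
    rw [Finset.sum_div]
    refine Finset.sum_congr rfl fun k _ => ?_
    rw [(hderiv k v).deriv]
    by_cases hk : E k v ∈ Set.Ioo a b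
    · rw [if_pos hk, hG, Set.indicator_of_mem hk]
      exact aux_alg hsa χ hcyc hv (hψ0 k v) (heig k v).2
    · rw [if_neg hk, hG, Set.indicator_of_notMem hk, zero_div, mul_zero]
  have hmk : ∀ k, Measurable fun v => deriv (E k) v * G (E k v) := fun k =>
    (measurable_deriv (E k)).mul (hGm.comp (hEc k).measurable)
  rw [integral_congr_ae hae, ← integral_indicator measurableSet_Ioo]
  change _ = ∫ x, G x
  rw [integral_eq_lintegral_of_nonneg_ae
      (Filter.Eventually.of_forall fun v => Finset.sum_nonneg fun k _ => mul_nonneg (hd0 k v) (hG0 _))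
      (Finset.measurable_sum _ fun k _ => hmk k).aestronglyMeasurable,
    integral_eq_lintegral_of_nonneg_ae (Filter.Eventually.of_forall hG0) hGm.aestronglyMeasurable]
  congr 1
  have s1 : ∀ v, ENNReal.ofReal (∑ k, deriv (E k) v * G (E k v)) =
      ∑ k, ENNReal.ofReal (deriv (E k) v * G (E k v)) := fun v =>
    ENNReal.ofReal_sum_of_nonneg fun k _ => mul_nonneg (hd0 k v) (hG0 _)
  simp_rw [s1]
  rw [lintegral_finset_sum _ fun k _ => (hmk k).ennreal_ofReal]
  have s2 : ∀ k, ∫⁻ v, ENNReal.ofReal (deriv (E k) v * G (E k v)) =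
      ∫⁻ x in Set.range (E k), ENNReal.ofReal (G x) := by
    intro k
    rw [← Set.image_univ, lintegral_image_eq_lintegral_abs_deriv_mul MeasurableSet.univ
      (f' := deriv (E k))
      (fun v _ => ((hderiv k v).differentiableAt.hasDerivAt).hasDerivWithinAt) (hinj k).injOn]
    rw [Measure.restrict_univ]
    refine lintegral_congr fun v => ?_
    rw [abs_of_nonneg (hd0 k v), ENNReal.ofReal_mul (hd0 k v)]
  simp_rw [s2]
  have hmr : ∀ k, MeasurableSet (Set.range (E k)) := fun k =>
    ((hEc k).measurableEmbedding (hinj k)).measurableSet_range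
  rw [← tsum_fintype (L := .unconditional _), ← lintegral_iUnion hmr]
  · have hnull : volume (⋃ k, Set.range (E k))ᶜ = 0 :=
      (aux_cover hsa hφ E hall).measure_zero _
    rw [Measure.restrict_eq_self_of_ae_mem]
    exact mem_ae_iff.2 hnull
  · intro k j hkj
    rw [Function.onFun, Set.disjoint_left]
    rintro _ ⟨v, rfl⟩ ⟨w, hw⟩
    exact hkj (hinj2 j k w v hw).2.symm
end
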